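/- For any k : ℕ and any S, T, T_j : Set (Fin k → Bool), the argument with premises P_S(x) = ∅ and P_{T_j}(x) ≠ ∅ and conclusion P_T(x) ≠ ∅ is PSA-valid if and only if T_j ⊆ S ∪ T. -/

import Mathlib

/-- The constituent `C_σ(x)`. -/
def constituent {U : Type*} {k : ℕ} (x : Fin k → Set U) (σ : Fin k → Bool) : Set U :=
  ⋂ i, if σ i = true then x i else (x i)ᶜ

/-- The term function associated to a set `S` of constituent indices:
`P_S(x) = ⋃ σ ∈ S, C_σ(x)`. -/
def PSfun {U : Type*} {k : ℕ} (S : Set (Fin k → Bool)) (x : Fin k → Set U) : Set U :=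
  ⋃ σ ∈ S, constituent x σ

/-!
Every point lies in exactly one constituent, so `P_S(x)` is the preimage of `S` under the map
sending a point to the index of its constituent. Every map into the set of indices arises in this
way from an assignment; the constant map with value `σ ∈ T_j \ (S ∪ T)` gives a countermodel.
Conversely, if `T_j ⊆ S ∪ T`, then `P_{T_j}(x) ⊆ P_S(x) ∪ P_T(x)`.
-/

section Signature

variable {ι U : Type*}

open scoped Classical in
/-- The index of the constituent of `x` that contains the point `u`. The index type is
arbitrary; `Fin k` gives the indices of `constituent`. -/
noncomputable def signature (x : ι → Set U) (u : U) : ι → Bool :=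
  fun i => decide (u ∈ x i)

theorem signature_surjective : Function.Surjective (signature : (ι → Set U) → U → ι → Bool) :=
  fun f => ⟨fun i => {u | f u i = true}, by ext u i; simp [signature]⟩

end Signature

section TermFunction

variable {U : Type*} {k : ℕ}

theorem mem_constituent_iff (x : Fin k → Set U) (σ : Fin k → Bool) (u : U) :
    u ∈ constituent x σ ↔ signature x u = σ := by
  simp only [constituent, Set.mem_iInter, funext_iff, signature]
  refine forall_congr' fun i => ?_
  cases σ i <;> simp

theorem PSfun_eq_preimage_signature (S : Set (Fin k → Bool)) (x : Fin k → Set U) :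
    PSfun S x = signature x ⁻¹' S := by
  ext u
  simp [PSfun, mem_constituent_iff]

theorem PSfun_mono {S T : Set (Fin k → Bool)} (h : S ⊆ T) (x : Fin k → Set U) :
    PSfun S x ⊆ PSfun T x :=
  Set.biUnion_subset_biUnion_left h

theorem PSfun_union (S T : Set (Fin k → Bool)) (x : Fin k → Set U) :
    PSfun (S ∪ T) x = PSfun S x ∪ PSfun T x :=
  Set.biUnion_union S T (constituent x)

variable (U) in
theorem exists_forall_PSfun_nonempty_iff_mem [Nonempty U] (σ : Fin k → Bool) :
    ∃ x : Fin k → Set U, ∀ R, (PSfun R x).Nonempty ↔ σ ∈ R := by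
  obtain ⟨x, hx⟩ := signature_surjective fun _ : U => σ
  refine ⟨x, fun R => ?_⟩
  simp [PSfun_eq_preimage_signature, hx, Set.Nonempty]

end TermFunction

theorem negated_conclusion_single (k : ℕ) (S T Tj : Set (Fin k → Bool)) :
    (∀ (U : Type), Nonempty U → ∀ x : Fin k → Set U,
      PSfun S x = ∅ → PSfun Tj x ≠ ∅ → PSfun T x ≠ ∅) ↔ Tj ⊆ S ∪ T := by
  simp only [← Set.nonempty_iff_ne_empty, ← Set.not_nonempty_iff_eq_empty]
  constructor
  · intro hvalid σ hσ
    obtain ⟨x, hx⟩ := exists_forall_PSfun_nonempty_iff_mem Unit σ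
    have hST : σ ∉ S → σ ∈ T := by
      simpa only [hx, hσ, true_imp_iff] using hvalid Unit inferInstance x
    exact or_iff_not_imp_left.2 hST
  · intro hsub U _ x hS hTj
    have hST : (PSfun S x ∪ PSfun T x).Nonempty :=
      PSfun_union S T x ▸ hTj.mono (PSfun_mono hsub x)
    exact (Set.union_nonempty.1 hST).resolve_left hS
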